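/- arXiv:1704.05381 — 2 statements merged into one kernel-verified Lean document; each statement's English description precedes it below -/
import Mathlib

section
/- Fix m with 3/2 < m < 2 and β with 0 < β < (m−1)/2. There exist constants C < ∞ and ε₀ > 0 such that for every z ∈ bD_m and every 0 < ε < ε₀: ∫_{bD_m} |Re w₁|^{m−2} · | Δ(w, z+εN(z))^{−1} − Δ(w,z)^{−1} | dH³(w) ≤ C·ε^β. -/
open MeasureTheory Complex
open scoped ENNReal

noncomputable section

/-- `ℂ²` with the Euclidean metric. -/
abbrev C2 := EuclideanSpace ℂ (Fin 2)

instance : MeasurableSpace C2 := borel _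
instance : BorelSpace C2 := ⟨rfl⟩

/-- The defining function `ρ(w) = |w₂|² + |Re w₁|^m + (Im w₁)² − 1`. -/
def rhom (m : ℝ) (w : C2) : ℝ := ‖w 1‖ ^ 2 + |(w 0).re| ^ m + (w 0).im ^ 2 - 1

/-- The domain `D_m = {ρ < 0}`. -/
def Dm (m : ℝ) : Set C2 := {w | rhom m w < 0}

/-- The boundary `bD_m = {ρ = 0}`. -/
def bDm (m : ℝ) : Set C2 := {w | rhom m w = 0}

/-- The Cauchy–Leray denominator
`Δ(w,z) = ((m/2)|u₁|^{m−1}·sgn(u₁) − i v₁)(w₁−z₁) + conj(w₂)(w₂−z₂)`. -/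
def Deltam (m : ℝ) (w z : C2) : ℂ :=
  ((m / 2 * |(w 0).re| ^ (m - 1) * Real.sign (w 0).re : ℝ) - I * ((w 0).im : ℂ))
      * (w 0 - z 0)
    + (starRingEnd ℂ) (w 1) * (w 1 - z 1)

/-- The real gradient `∇ρ` on `ℝ⁴ ≅ ℂ²`, written as a vector in `ℂ²`:
`∇ρ(w) = (m|u₁|^{m−1} sgn(u₁) + 2i v₁, 2w₂)`. -/
def gradRhom (m : ℝ) (w : C2) : C2 :=
  (WithLp.equiv 2 (Fin 2 → ℂ)).symm
    ![(m * |(w 0).re| ^ (m - 1) * Real.sign (w 0).re : ℝ)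
        + (2 * (w 0).im : ℝ) * I, 2 * w 1]

/-- The inward unit normal `N(z) = −∇ρ(z)/|∇ρ(z)|`. -/
def Nm (m : ℝ) (z : C2) : C2 := (-‖gradRhom m z‖⁻¹ : ℝ) • gradRhom m z

/-!
Up to the factor `1 / 2`, the real part of `Δ(w, z)` is the real inner product of `∇ρ(w)` with
`w - z`. For `1 < m ≤ 2` the function `ρ` is strongly convex on bounded sets, and convexity used
twice, from `w` and from the displaced point, gives `Re Δ(w, z + εN(z)) ≥ κ |w - z|²` uniformly in
small `ε ≥ 0`. Since `Δ(w, ·)` moves by at most `L ε`, interpolating between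
`|a⁻¹ - b⁻¹| ≤ 2 / δ` and `|a⁻¹ - b⁻¹| ≤ |a - b| / δ²` bounds the kernel by a multiple of
`ε ^ β |w - z| ^ (-(2 + 2β))`.

It remains to integrate `|u₁| ^ (m - 2) |w - z| ^ (-s)` with `s = 2 + 2β < m + 1`, uniformly in `z`.
The boundary is a generalized ellipsoid `∑ |x k| ^ p k = 1` in `ℝ⁴`, covered by finitely many
patches that project bi-Lipschitzly to three of the coordinates. Distributing `s` over these
coordinates dominates the integrand by a product of functions of one variable, each of the form
`|t| ^ (-r) |t - a| ^ (-q)` with `r + q < 1`; this is possible because the weight uses up at most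
`2 - m` of the total room `3`.
-/

open scoped NNReal
open Set Metric Bornology

lemma rpow_neg_le_rpow_neg_of_le {a b : ℝ≥0∞} {s : ℝ} (hs : 0 ≤ s) (h : a ≤ b) :
    b ^ (-s) ≤ a ^ (-s) := by
  rw [ENNReal.rpow_neg, ENNReal.rpow_neg]
  exact ENNReal.inv_le_inv.2 (ENNReal.rpow_le_rpow h hs)

lemma rpow_neg_add_of_nonneg (a : ℝ≥0∞) {s t : ℝ} (hs : 0 ≤ s) (ht : 0 ≤ t) :
    a ^ (-(s + t)) = a ^ (-s) * a ^ (-t) := by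
  rcases eq_or_ne a ⊤ with rfl | ha
  · rcases hs.eq_or_lt with rfl | hs
    · simp
    · rw [ENNReal.top_rpow_of_neg (by linarith), ENNReal.top_rpow_of_neg (by linarith), zero_mul]
  · rw [ENNReal.rpow_neg, ENNReal.rpow_add_of_nonneg _ _ hs ht,
      ENNReal.mul_inv (.inr (ENNReal.rpow_ne_top_of_nonneg ht ha))
        (.inl (ENNReal.rpow_ne_top_of_nonneg hs ha)), ← ENNReal.rpow_neg, ← ENNReal.rpow_neg]

lemma rpow_neg_sum_of_nonneg {ι : Type*} (I : Finset ι) (a : ℝ≥0∞) {s : ι → ℝ}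
    (hs : ∀ i ∈ I, 0 ≤ s i) : a ^ (-∑ i ∈ I, s i) = ∏ i ∈ I, a ^ (-s i) := by
  induction I using Finset.cons_induction with
  | empty => simp
  | cons i I hi ih =>
    rw [Finset.forall_mem_cons] at hs
    rw [Finset.sum_cons, Finset.prod_cons, rpow_neg_add_of_nonneg a hs.1 (Finset.sum_nonneg hs.2),
      ih hs.2]

lemma rpow_neg_mul_rpow_neg_le_add (a b : ℝ≥0∞) {s t : ℝ} (hs : 0 ≤ s) (ht : 0 ≤ t) :
    a ^ (-s) * b ^ (-t) ≤ a ^ (-(s + t)) + b ^ (-(s + t)) := by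
  simp only [rpow_neg_add_of_nonneg _ hs ht]
  rcases le_total a b with hab | hba
  · exact le_add_right (mul_le_mul_right (rpow_neg_le_rpow_neg_of_le ht hab) _)
  · exact le_add_left (mul_le_mul_left (rpow_neg_le_rpow_neg_of_le hs hba) _)

section Potential

variable {E : Type*} [NormedAddCommGroup E] [NormedSpace ℝ E] [FiniteDimensional ℝ E]
  [MeasurableSpace E] [BorelSpace E] {μ : Measure E} [μ.IsAddHaarMeasure]

lemma setLIntegral_ball_enorm_rpow_neg_lt_top [Nontrivial E] {s : ℝ}
    (hs : s < Module.finrank ℝ E) (R : ℝ) : ∫⁻ x in ball 0 R, ‖x‖ₑ ^ (-s) ∂μ < ⊤ := by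
  have integrable : IntegrableOn (fun x : E ↦ ‖x‖ ^ (-s)) (ball 0 R) μ :=
    integrableOn_ball_of_norm_le_rpow (C := 1) Module.finrank_pos hs
      (.of_forall fun x ↦ by simp [abs_of_nonneg (Real.rpow_nonneg (norm_nonneg x) _)])
      (by fun_prop : Measurable _).aestronglyMeasurable
  refine lt_of_eq_of_lt (lintegral_congr_ae ?_) integrable.lintegral_lt_top
  filter_upwards [ae_restrict_of_ae (Measure.ae_ne μ 0)] with x hx
  rw [← ofReal_norm, ENNReal.ofReal_rpow_of_pos (norm_pos_iff.2 hx)]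

lemma exists_setLIntegral_edist_rpow_neg_le [Nontrivial E] {s : ℝ} (hs₀ : 0 ≤ s)
    (hs : s < Module.finrank ℝ E) {T : Set E} (hT : μ T ≠ ⊤) :
    ∃ M : ℝ≥0∞, M < ⊤ ∧ ∀ a, ∫⁻ x in T, edist x a ^ (-s) ∂μ ≤ M := by
  set F : E → ℝ≥0∞ := (ball 0 1).indicator fun x ↦ ‖x‖ₑ ^ (-s) with hF
  have F_int : ∫⁻ x, F x ∂μ < ⊤ := by
    rw [lintegral_indicator measurableSet_ball]
    exact setLIntegral_ball_enorm_rpow_neg_lt_top hs 1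
  have pointwise (a x : E) : edist x a ^ (-s) ≤ F (x - a) + 1 := by
    rw [edist_eq_enorm_sub]
    by_cases hx : x - a ∈ ball 0 1
    · simp [hF, indicator_of_mem hx]
    · rw [mem_ball_zero_iff, not_lt, ← ENNReal.one_le_ofReal, ofReal_norm] at hx
      exact le_add_left (by simpa using rpow_neg_le_rpow_neg_of_le hs₀ hx)
  refine ⟨∫⁻ x, F x ∂μ + μ T, ENNReal.add_lt_top.2 ⟨F_int, hT.lt_top⟩, fun a ↦ ?_⟩
  calc ∫⁻ x in T, edist x a ^ (-s) ∂μ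
      ≤ ∫⁻ x in T, (F (x - a) + 1) ∂μ := lintegral_mono (pointwise a)
    _ = ∫⁻ x in T, F (x - a) ∂μ + μ T := by
        rw [lintegral_add_right _ measurable_const, setLIntegral_one]
    _ ≤ ∫⁻ x, F (x - a) ∂μ + μ T := by gcongr; exact Measure.restrict_le_self
    _ = ∫⁻ x, F x ∂μ + μ T := by rw [lintegral_sub_right_eq_self F a]

lemma exists_setLIntegral_enorm_mul_edist_rpow_neg_le [Nontrivial E] {r s : ℝ} (hr : 0 ≤ r)
    (hs : 0 ≤ s) (hrs : r + s < Module.finrank ℝ E) {T : Set E} (hT : μ T ≠ ⊤) :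
    ∃ M : ℝ≥0∞, M < ⊤ ∧ ∀ a, ∫⁻ x in T, ‖x‖ₑ ^ (-r) * edist x a ^ (-s) ∂μ ≤ M := by
  obtain ⟨M, hM, hle⟩ := exists_setLIntegral_edist_rpow_neg_le (μ := μ) (add_nonneg hr hs) hrs hT
  refine ⟨M + M, ENNReal.add_lt_top.2 ⟨hM, hM⟩, fun a ↦ ?_⟩
  calc ∫⁻ x in T, ‖x‖ₑ ^ (-r) * edist x a ^ (-s) ∂μ
      ≤ ∫⁻ x in T, (edist x 0 ^ (-(r + s)) + edist x a ^ (-(r + s))) ∂μ := by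
        refine lintegral_mono fun x ↦ ?_
        simpa only [edist_zero_right] using rpow_neg_mul_rpow_neg_le_add ‖x‖ₑ (edist x a) hr hs
    _ = ∫⁻ x in T, edist x 0 ^ (-(r + s)) ∂μ + ∫⁻ x in T, edist x a ^ (-(r + s)) ∂μ :=
        lintegral_add_right _ (by fun_prop)
    _ ≤ M + M := add_le_add (hle 0) (hle a)

end Potential

lemma lintegral_pi_prod_eq_prod {n : ℕ} {E : Fin n → Type*} [∀ i, MeasurableSpace (E i)]
    (μ : ∀ i, Measure (E i)) [∀ i, SigmaFinite (μ i)] {f : ∀ i, E i → ℝ≥0∞}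
    (hf : ∀ i, Measurable (f i)) :
    ∫⁻ x, ∏ i, f i (x i) ∂Measure.pi μ = ∏ i, ∫⁻ t, f i t ∂μ i := by
  induction n with
  | zero => simp
  | succ n ih =>
    have measurable_tail : Measurable fun y : ∀ i : Fin n, E i.succ ↦ ∏ i, f i.succ (y i) := by
      fun_prop
    calc ∫⁻ x, ∏ i, f i (x i) ∂Measure.pi μ
        = ∫⁻ x : E 0 × ∀ i : Fin n, E i.succ, f 0 x.1 * ∏ i, f i.succ (x.2 i)
            ∂(μ 0).prod (Measure.pi fun i ↦ μ i.succ) := by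
          rw [← (measurePreserving_piFinSuccAbove μ 0).symm.lintegral_comp_emb
            (MeasurableEquiv.measurableEmbedding _)]
          exact lintegral_congr fun x ↦ Fin.prod_univ_succ _
      _ = ∏ i, ∫⁻ t, f i t ∂μ i := by
          rw [lintegral_prod_mul (hf 0).aemeasurable measurable_tail.aemeasurable,
            ih _ fun i ↦ hf i.succ, Fin.prod_univ_succ]

lemma map_restrict_hausdorffMeasure_le {X Y : Type*} [MetricSpace X] [MeasurableSpace X]
    [BorelSpace X] [MetricSpace Y] [MeasurableSpace Y] [BorelSpace Y] {P : Set X} {f : X → Y}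
    {K : ℝ≥0} {d : ℝ} (hd : 0 ≤ d) (hf : Continuous f)
    (hK : AntilipschitzWith K (P.domRestrict f)) :
    (μH[d].restrict P).map f ≤ (K : ℝ≥0∞) ^ d • μH[d].restrict (f '' P) := by
  refine Measure.le_iff.2 fun A hA ↦ ?_
  rw [Measure.map_apply hf.measurable hA, Measure.restrict_apply (hf.measurable hA),
    Measure.smul_apply, smul_eq_mul, Measure.restrict_apply hA]
  have preimage_eq : f ⁻¹' A ∩ P = (↑) '' (P.domRestrict f ⁻¹' (A ∩ f '' P)) := by
    ext x
    simp only [mem_inter_iff, mem_preimage, mem_image, Subtype.exists, domRestrict_apply]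
    grind
  rw [preimage_eq, isometry_subtype_coe.hausdorffMeasure_image (.inl hd)]
  exact hK.hausdorffMeasure_preimage_le hd _

section Chart

variable {X : Type*} [MetricSpace X] [MeasurableSpace X] [BorelSpace X] {n : ℕ} {P : Set X}
  {f : X → Fin n → ℝ} {K : ℝ≥0}

lemma setLIntegral_prod_comp_le (hf : Continuous f) (hK : AntilipschitzWith K (P.domRestrict f))
    {T : Fin n → Set ℝ} (hT : MapsTo f P (univ.pi T)) {φ : Fin n → ℝ → ℝ≥0∞}
    (hφ : ∀ i, Measurable (φ i)) :
    ∫⁻ w in P, ∏ i, φ i (f w i) ∂μH[n] ≤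
      (K : ℝ≥0∞) ^ (n : ℝ) * ∏ i, ∫⁻ t in T i, φ i t := by
  have hausdorff_eq : (μH[n] : Measure (Fin n → ℝ)) = volume := by
    simpa using hausdorffMeasure_pi_real (ι := Fin n)
  have measurable_prod : Measurable fun x : Fin n → ℝ ↦ ∏ i, φ i (x i) := by fun_prop
  calc ∫⁻ w in P, ∏ i, φ i (f w i) ∂μH[n]
      = ∫⁻ x, ∏ i, φ i (x i) ∂((μH[n].restrict P).map f) :=
        (lintegral_map measurable_prod hf.measurable).symm
    _ ≤ ∫⁻ x, ∏ i, φ i (x i) ∂((K : ℝ≥0∞) ^ (n : ℝ) • volume.restrict (univ.pi T)) := by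
        refine lintegral_mono' ?_ le_rfl
        refine (map_restrict_hausdorffMeasure_le n.cast_nonneg hf hK).trans ?_
        rw [hausdorff_eq]
        gcongr
        exact hT.image_subset
    _ = (K : ℝ≥0∞) ^ (n : ℝ) * ∏ i, ∫⁻ t in T i, φ i t := by
        rw [lintegral_smul_measure, smul_eq_mul, volume_pi, Measure.restrict_pi_pi,
          lintegral_pi_prod_eq_prod _ hφ]

-- The exponent `s` is shared out among the coordinates in proportion to the room `1 - r i` that the
-- weights leave, so that every one-dimensional integral converges.
lemma exists_exponents_sum_eq {r : Fin n → ℝ} (hr : ∀ i, r i < 1) {s : ℝ} (hs₀ : 0 ≤ s)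
    (hs : s < ∑ i, (1 - r i)) :
    ∃ t : Fin n → ℝ, (∀ i, 0 ≤ t i) ∧ (∀ i, r i + t i < 1) ∧ ∑ i, t i = s := by
  have room_pos := hs₀.trans_lt hs
  refine ⟨fun i ↦ s / (∑ j, (1 - r j)) * (1 - r i), fun i ↦ ?_, fun i ↦ ?_, ?_⟩
  · exact mul_nonneg (div_nonneg hs₀ room_pos.le) (by linarith [hr i])
  · linarith [mul_lt_of_lt_one_left (sub_pos.2 (hr i)) ((div_lt_one room_pos).2 hs)]
  · rw [← Finset.mul_sum, div_mul_cancel₀ _ room_pos.ne']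

lemma exists_setLIntegral_prod_mul_edist_rpow_neg_le (hf : LipschitzWith 1 f)
    (hK : AntilipschitzWith K (P.domRestrict f)) (hP : IsBounded P) {r : Fin n → ℝ}
    (hr₀ : ∀ i, 0 ≤ r i) (hr : ∀ i, r i < 1) {s : ℝ} (hs₀ : 0 ≤ s) (hs : s < ∑ i, (1 - r i)) :
    ∃ M : ℝ≥0∞, M < ⊤ ∧ ∀ z, ∫⁻ w in P, (∏ i, ‖f w i‖ₑ ^ (-r i)) * edist w z ^ (-s) ∂μH[n] ≤ M := by
  obtain ⟨t, ht₀, hrt, rfl⟩ := exists_exponents_sum_eq hr hs₀ hs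
  obtain ⟨R, hR⟩ := (hf.isBounded_image hP).subset_closedBall 0
  have mapsTo_box : MapsTo f P (univ.pi fun _ ↦ closedBall (0 : ℝ) R) := fun w hw i _ ↦
    mem_closedBall.2 <| (dist_le_pi_dist (f w) 0 i).trans (hR (mem_image_of_mem f hw))
  have one_dim (i : Fin n) := exists_setLIntegral_enorm_mul_edist_rpow_neg_le (μ := volume)
    (hr₀ i) (ht₀ i) (by simpa using hrt i) (T := closedBall (0 : ℝ) R) measure_closedBall_lt_top.ne
  choose M hM hle using one_dim
  refine ⟨(K : ℝ≥0∞) ^ (n : ℝ) * ∏ i, M i, ?_, fun z ↦ ?_⟩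
  · exact ENNReal.mul_lt_top (ENNReal.rpow_lt_top_of_nonneg n.cast_nonneg ENNReal.coe_ne_top)
      (ENNReal.prod_lt_top fun i _ ↦ hM i)
  have kernel_le (w : X) : edist w z ^ (-∑ i, t i) ≤ ∏ i, edist (f w i) (f z i) ^ (-t i) := by
    rw [rpow_neg_sum_of_nonneg _ _ fun i _ ↦ ht₀ i]
    refine Finset.prod_le_prod' fun i _ ↦ rpow_neg_le_rpow_neg_of_le (ht₀ i) ?_
    simpa using (edist_le_pi_edist (f w) (f z) i).trans (hf w z)
  calc ∫⁻ w in P, (∏ i, ‖f w i‖ₑ ^ (-r i)) * edist w z ^ (-∑ i, t i) ∂μH[n]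
      ≤ ∫⁻ w in P, ∏ i, ‖f w i‖ₑ ^ (-r i) * edist (f w i) (f z i) ^ (-t i) ∂μH[n] := by
        simp only [Finset.prod_mul_distrib]
        exact lintegral_mono fun w ↦ mul_le_mul_right (kernel_le w) _
    _ ≤ (K : ℝ≥0∞) ^ (n : ℝ) *
          ∏ i, ∫⁻ t' in closedBall 0 R, ‖t'‖ₑ ^ (-r i) * edist t' (f z i) ^ (-t i) :=
        setLIntegral_prod_comp_le hf.continuous hK mapsTo_box
          (φ := fun i t' ↦ ‖t'‖ₑ ^ (-r i) * edist t' (f z i) ^ (-t i)) (by fun_prop)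
    _ ≤ (K : ℝ≥0∞) ^ (n : ℝ) * ∏ i, M i := by
        gcongr with i
        exact hle i _

end Chart

section AbsRpow

variable {p : ℝ}

/-- The derivative of `t ↦ |t| ^ p` for `1 < p`. At `t = 0` the factor `|t| ^ (p - 2)` may take a
junk value, which the factor `t` kills. -/
def absRpowDeriv (p t : ℝ) : ℝ := p * |t| ^ (p - 2) * t

lemma hasDerivAt_abs_rpow_absRpowDeriv (hp : 1 < p) (t : ℝ) :
    HasDerivAt (fun t ↦ |t| ^ p) (absRpowDeriv p t) t :=
  hasDerivAt_abs_rpow t hp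

lemma abs_absRpowDeriv (hp : 1 < p) (t : ℝ) : |absRpowDeriv p t| = p * |t| ^ (p - 1) := by
  rcases eq_or_ne t 0 with rfl | ht
  · simp [absRpowDeriv, Real.zero_rpow (sub_ne_zero.2 hp.ne')]
  · rw [absRpowDeriv, abs_mul, abs_of_nonneg (by positivity), mul_assoc,
      ← Real.rpow_add_one (abs_ne_zero.2 ht)]
    ring_nf

lemma absRpowDeriv_eq_sign (p t : ℝ) : absRpowDeriv p t = p * |t| ^ (p - 1) * Real.sign t := by
  rcases eq_or_ne t 0 with rfl | ht
  · simp [absRpowDeriv]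
  · have abs_mul_sign : |t| * Real.sign t = t := by
      rcases ht.lt_or_gt with ht | ht
      · rw [abs_of_neg ht, Real.sign_of_neg ht, neg_mul_neg, mul_one]
      · rw [abs_of_pos ht, Real.sign_of_pos ht, mul_one]
    rw [absRpowDeriv, show p - 1 = p - 2 + 1 by ring, Real.rpow_add_one (abs_ne_zero.2 ht),
      mul_assoc p (_ * _), mul_assoc _ |t|, abs_mul_sign, mul_assoc]

lemma absRpowDeriv_two (t : ℝ) : absRpowDeriv 2 t = 2 * t := by
  norm_num [absRpowDeriv]

lemma abs_abs_rpow_sub_abs_rpow_le (hp : 1 < p) {s t : ℝ} (hs : |s| ≤ 1) (ht : |t| ≤ 1) :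
    |(|s| ^ p - |t| ^ p)| ≤ p * |s - t| := by
  refine (convex_Icc (-1 : ℝ) 1).norm_image_sub_le_of_norm_hasDerivWithin_le
    (fun u _ ↦ (hasDerivAt_abs_rpow_absRpowDeriv hp u).hasDerivWithinAt) (fun u hu ↦ ?_)
    (abs_le.1 ht) (abs_le.1 hs)
  rw [Real.norm_eq_abs, abs_absRpowDeriv hp]
  exact mul_le_of_le_one_right (by linarith)
    (Real.rpow_le_one (abs_nonneg u) (abs_le.2 hu) (by linarith))

lemma mul_abs_sub_le_abs_abs_rpow_sub_abs_rpow (hp : 1 < p) {a : ℝ} (ha : 0 ≤ a) {T : Set ℝ}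
    (hT : T.OrdConnected) (haT : ∀ t ∈ T, a ≤ |t|) {s t : ℝ} (hs : s ∈ T) (ht : t ∈ T) :
    p * a ^ (p - 1) * |s - t| ≤ |(|s| ^ p - |t| ^ p)| := by
  wlog hst : t ≤ s generalizing s t
  · rw [abs_sub_comm, abs_sub_comm (|s| ^ p)]
    exact this ht hs (le_of_not_ge hst)
  rcases hst.eq_or_lt with rfl | hst
  · simp
  obtain ⟨ξ, hξ, slope_eq⟩ := exists_hasDerivAt_eq_slope _ _ hst
    (fun u _ ↦ (hasDerivAt_abs_rpow_absRpowDeriv hp u).continuousAt.continuousWithinAt)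
    fun u _ ↦ hasDerivAt_abs_rpow_absRpowDeriv hp u
  have diff_eq : |s| ^ p - |t| ^ p = absRpowDeriv p ξ * (s - t) := by
    rw [slope_eq, div_mul_cancel₀ _ (sub_pos.2 hst).ne']
  rw [diff_eq, abs_mul, abs_absRpowDeriv hp]
  gcongr
  exact haT ξ (hT.out ht hs (Ioo_subset_Icc_self hξ))

end AbsRpow

lemma dist_le_mul_dist_removeNth {n : ℕ} {x y : Fin (n + 1) → ℝ} {φ : Fin (n + 1) → ℝ → ℝ}
    (i : Fin (n + 1)) {κ L : ℝ} (hκ : 0 < κ) (hL : 0 ≤ L)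
    (hxy : ∑ k, φ k (x k) = ∑ k, φ k (y k)) (hi : κ * |x i - y i| ≤ |φ i (x i) - φ i (y i)|)
    (hφ : ∀ k, |φ k (x k) - φ k (y k)| ≤ L * |x k - y k|) :
    dist x y ≤ max 1 (n * L / κ) * dist (i.removeNth x) (i.removeNth y) := by
  have coord_le (j : Fin n) :
      |x (i.succAbove j) - y (i.succAbove j)| ≤ dist (i.removeNth x) (i.removeNth y) :=
    dist_le_pi_dist (i.removeNth x) (i.removeNth y) j
  have height_eq : φ i (x i) - φ i (y i) =
      ∑ j, (φ (i.succAbove j) (y (i.succAbove j)) - φ (i.succAbove j) (x (i.succAbove j))) := by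
    rw [Fin.sum_univ_succAbove _ i, Fin.sum_univ_succAbove _ i] at hxy
    rw [Finset.sum_sub_distrib]
    linarith
  have height_le : κ * |x i - y i| ≤ n * L * dist (i.removeNth x) (i.removeNth y) :=
    calc κ * |x i - y i|
        ≤ ∑ _j : Fin n, L * dist (i.removeNth x) (i.removeNth y) := by
          refine (height_eq ▸ hi).trans (Finset.abs_sum_le_sum_abs _ _ |>.trans ?_)
          gcongr with j
          rw [abs_sub_comm]
          exact (hφ _).trans (mul_le_mul_of_nonneg_left (coord_le j) hL)
      _ = n * L * dist (i.removeNth x) (i.removeNth y) := by simp [mul_assoc]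
  refine (dist_pi_le_iff (by positivity)).2 ((Fin.forall_iff_succAbove i).2 ⟨?_, fun j ↦ ?_⟩)
  · calc dist (x i) (y i) ≤ n * L / κ * dist (i.removeNth x) (i.removeNth y) := by
          rw [div_mul_eq_mul_div, le_div_iff₀ hκ, mul_comm, Real.dist_eq]
          exact height_le
      _ ≤ _ := by gcongr; exact le_max_right _ _
  · exact (coord_le j).trans (le_mul_of_one_le_left dist_nonneg (le_max_left _ _))

/-- The generalized ellipsoid `∑ k, |x k| ^ p k = 1`, with `x` a system of real coordinates on the
ambient space `X`. -/
def ellipsoid {X : Type*} {n : ℕ} (x : X → Fin n → ℝ) (p : Fin n → ℝ) : Set X :=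
  {w | ∑ k, |x w k| ^ p k = 1}

section Ellipsoid

variable {X : Type*} {n : ℕ} {x : X → Fin n → ℝ} {p : Fin n → ℝ}

lemma abs_le_one_of_mem_ellipsoid (hp : ∀ k, 0 < p k) {w : X} (hw : w ∈ ellipsoid x p)
    (k : Fin n) : |x w k| ≤ 1 := by
  by_contra! h
  have term_le := Finset.single_le_sum (f := fun k ↦ |x w k| ^ p k)
    (fun k _ ↦ Real.rpow_nonneg (abs_nonneg _) _) (Finset.mem_univ k)
  exact (Real.one_lt_rpow h (hp k)).not_ge (term_le.trans_eq hw)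

lemma exists_inv_le_abs_of_mem_ellipsoid (hp : ∀ k, 1 ≤ p k) {w : X} (hw : w ∈ ellipsoid x p) :
    ∃ k, (n : ℝ)⁻¹ ≤ |x w k| := by
  have sum_eq_one : ∑ k, |x w k| ^ p k = 1 := hw
  have nonempty : (Finset.univ : Finset (Fin n)).Nonempty := by
    by_contra h
    simp [Finset.not_nonempty_iff_eq_empty.1 h] at sum_eq_one
  have hn : (n : ℝ) ≠ 0 := by simpa using nonempty.card_ne_zero
  obtain ⟨k, -, hk⟩ : ∃ k ∈ Finset.univ, (n : ℝ)⁻¹ ≤ |x w k| ^ p k :=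
    Finset.exists_le_of_sum_le nonempty (by simp [hn, sum_eq_one])
  refine ⟨k, hk.trans ?_⟩
  simpa using Real.rpow_le_rpow_of_exponent_ge' (abs_nonneg _)
    (abs_le_one_of_mem_ellipsoid (fun k ↦ one_pos.trans_le (hp k)) hw k) zero_le_one (hp k)

lemma isClosed_ellipsoid [TopologicalSpace X] (hx : Continuous x) (hp : ∀ k, 0 < p k) :
    IsClosed (ellipsoid x p) :=
  isClosed_eq (continuous_finsetSum _ fun k _ ↦
    ((continuous_apply k).comp hx).abs.rpow_const fun _ ↦ .inr (hp k).le) continuous_const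

lemma isBounded_ellipsoid [PseudoMetricSpace X] {K : ℝ≥0} (hx : AntilipschitzWith K x)
    (hp : ∀ k, 0 < p k) : IsBounded (ellipsoid x p) := by
  refine (hx.isBounded_preimage (isBounded_closedBall (x := 0) (r := 1))).subset fun w hw ↦ ?_
  rw [mem_preimage, mem_closedBall_zero_iff, pi_norm_le_iff_of_nonneg zero_le_one]
  exact abs_le_one_of_mem_ellipsoid hp hw

end Ellipsoid

section EllipsoidPatch

variable {X : Type*} {n : ℕ} {x : X → Fin (n + 1) → ℝ} {p : Fin (n + 1) → ℝ}

/-- The part of the ellipsoid on which the `i`-th coordinate has sign `σ` and absolute value at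
least `(n + 1)⁻¹`. It is a graph over the other coordinates. -/
def ellipsoidPatch (x : X → Fin (n + 1) → ℝ) (p : Fin (n + 1) → ℝ) (i : Fin (n + 1))
    (σ : SignType) : Set X :=
  {w ∈ ellipsoid x p | ((n + 1 : ℕ) : ℝ)⁻¹ ≤ σ * x w i}

lemma le_abs_of_le_sign_mul {σ : SignType} {a t : ℝ} (h : a ≤ σ * t) : a ≤ |t| := by
  refine h.trans ((le_abs_self _).trans ?_)
  rw [abs_mul]
  cases σ <;> simp

lemma ellipsoid_subset_iUnion_ellipsoidPatch (hp : ∀ k, 1 ≤ p k) :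
    ellipsoid x p ⊆ ⋃ q : Fin (n + 1) × SignType, ellipsoidPatch x p q.1 q.2 := fun w hw ↦ by
  obtain ⟨i, hi⟩ := exists_inv_le_abs_of_mem_ellipsoid hp hw
  exact mem_iUnion.2 ⟨(i, SignType.sign (x w i)), hw, by rwa [sign_mul_self]⟩

lemma exists_antilipschitzWith_removeNth_ellipsoidPatch [PseudoMetricSpace X] {K : ℝ≥0}
    (hx : AntilipschitzWith K x) (hp : ∀ k, 1 < p k) (i : Fin (n + 1)) (σ : SignType) :
    ∃ K' : ℝ≥0, AntilipschitzWith K'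
      ((ellipsoidPatch x p i σ).domRestrict fun w ↦ i.removeNth (x w)) := by
  set a : ℝ := ((n + 1 : ℕ) : ℝ)⁻¹
  set T : Set ℝ := {t | a ≤ σ * t}
  have ordConnected_T : T.OrdConnected :=
    (convex_halfSpace_ge (IsLinearMap.isLinearMap_smul (σ : ℝ)) a).ordConnected
  have hL : 0 ≤ ∑ k, p k := Finset.sum_nonneg fun k _ ↦ by linarith [hp k]
  have hκ : 0 < p i * a ^ (p i - 1) := by have := hp i; positivity
  refine ⟨K * (max 1 (n * (∑ k, p k) / (p i * a ^ (p i - 1)))).toNNReal,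
    AntilipschitzWith.of_le_mul_dist ?_⟩
  rintro ⟨w, hw, hwT⟩ ⟨v, hv, hvT⟩
  have le_one {w : X} (hw : w ∈ ellipsoid x p) :=
    abs_le_one_of_mem_ellipsoid (fun k ↦ one_pos.trans (hp k)) hw
  have dist_coords_le := dist_le_mul_dist_removeNth (φ := fun k t ↦ |t| ^ p k) i hκ hL
    (hw.trans hv.symm)
    (mul_abs_sub_le_abs_abs_rpow_sub_abs_rpow (hp i) (by positivity) ordConnected_T
      (fun _ ↦ le_abs_of_le_sign_mul) hwT hvT)
    fun k ↦ (abs_abs_rpow_sub_abs_rpow_le (hp k) (le_one hw k) (le_one hv k)).trans <|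
      mul_le_mul_of_nonneg_right
        (Finset.single_le_sum (fun k _ ↦ by linarith [hp k]) (Finset.mem_univ k)) (abs_nonneg _)
  rw [NNReal.coe_mul, Real.coe_toNNReal _ (by positivity), mul_assoc]
  exact (hx.le_mul_dist w v).trans (mul_le_mul_of_nonneg_left dist_coords_le K.2)

end EllipsoidPatch

section EllipsoidIntegral

variable {X : Type*} [MetricSpace X] [MeasurableSpace X] [BorelSpace X] {n : ℕ}
  {x : X → Fin (n + 1) → ℝ} {p r : Fin (n + 1) → ℝ} {s : ℝ} {K : ℝ≥0}

lemma measurableSet_ellipsoidPatch (hx : Continuous x) (hp : ∀ k, 0 < p k) (i : Fin (n + 1))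
    (σ : SignType) : MeasurableSet (ellipsoidPatch x p i σ) :=
  ((isClosed_ellipsoid hx hp).inter (isClosed_le continuous_const
    (continuous_const.mul ((continuous_apply i).comp hx)))).measurableSet

lemma exists_setLIntegral_ellipsoidPatch_le (hx₁ : LipschitzWith 1 x) (hx : AntilipschitzWith K x)
    (hp : ∀ k, 1 < p k) (hr₀ : ∀ k, 0 ≤ r k) (hr : ∀ k, r k < 1) (hs₀ : 0 ≤ s)
    (hs : s < n - ∑ k, r k) (i : Fin (n + 1)) (σ : SignType) :
    ∃ M : ℝ≥0∞, M < ⊤ ∧ ∀ z, ∫⁻ w in ellipsoidPatch x p i σ,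
      (∏ k, ‖x w k‖ₑ ^ (-r k)) * edist w z ^ (-s) ∂μH[n] ≤ M := by
  have hp₀ (k) : 0 < p k := one_pos.trans (hp k)
  obtain ⟨K', hK'⟩ := exists_antilipschitzWith_removeNth_ellipsoidPatch hx hp i σ
  have lipschitz : LipschitzWith 1 fun w ↦ i.removeNth (x w) := fun w v ↦
    (edist_pi_le_iff.2 fun j ↦ edist_le_pi_edist (x w) (x v) (i.succAbove j)).trans (hx₁ w v)
  have room : s < ∑ j, (1 - i.removeNth r j) := by
    have := Fin.sum_univ_succAbove r i
    simp only [Fin.removeNth, Finset.sum_sub_distrib, Finset.sum_const, Finset.card_univ,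
      Fintype.card_fin, nsmul_eq_mul, mul_one]
    linarith [hr₀ i]
  obtain ⟨M, hM, hle⟩ := exists_setLIntegral_prod_mul_edist_rpow_neg_le lipschitz hK'
    ((isBounded_ellipsoid hx hp₀).subset fun _ hw ↦ hw.1)
    (fun j ↦ hr₀ (i.succAbove j)) (fun j ↦ hr (i.succAbove j)) hs₀ room
  set a : ℝ := ((n + 1 : ℕ) : ℝ)⁻¹
  have hC : ‖a‖ₑ ^ (-r i) ≠ ⊤ :=
    ENNReal.rpow_ne_top_of_ne_zero (by simp [a, -Nat.cast_add]) enorm_ne_top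
  refine ⟨‖a‖ₑ ^ (-r i) * M, ENNReal.mul_lt_top hC.lt_top hM, fun z ↦ ?_⟩
  have factor_le {w : X} (hw : w ∈ ellipsoidPatch x p i σ) :
      ‖x w i‖ₑ ^ (-r i) ≤ ‖a‖ₑ ^ (-r i) := by
    refine rpow_neg_le_rpow_neg_of_le (hr₀ i) (enorm_le_iff_norm_le.2 ?_)
    rw [Real.norm_of_nonneg (by positivity)]
    exact le_abs_of_le_sign_mul hw.2
  calc ∫⁻ w in ellipsoidPatch x p i σ, (∏ k, ‖x w k‖ₑ ^ (-r k)) * edist w z ^ (-s) ∂μH[n]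
      ≤ ∫⁻ w in ellipsoidPatch x p i σ, ‖a‖ₑ ^ (-r i) *
          ((∏ j, ‖i.removeNth (x w) j‖ₑ ^ (-i.removeNth r j)) * edist w z ^ (-s)) ∂μH[n] := by
        refine setLIntegral_mono' (measurableSet_ellipsoidPatch hx₁.continuous hp₀ i σ)
          fun w hw ↦ ?_
        rw [Fin.prod_univ_succAbove _ i, mul_assoc]
        exact mul_le_mul_left (factor_le hw) _
    _ ≤ ‖a‖ₑ ^ (-r i) * M := by
        rw [lintegral_const_mul' _ _ hC]
        exact mul_le_mul_right (hle z) _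

theorem exists_setLIntegral_ellipsoid_le (hx₁ : LipschitzWith 1 x) (hx : AntilipschitzWith K x)
    (hp : ∀ k, 1 < p k) (hr₀ : ∀ k, 0 ≤ r k) (hr : ∀ k, r k < 1) (hs₀ : 0 ≤ s)
    (hs : s < n - ∑ k, r k) :
    ∃ M : ℝ≥0∞, M < ⊤ ∧ ∀ z, ∫⁻ w in ellipsoid x p,
      (∏ k, ‖x w k‖ₑ ^ (-r k)) * edist w z ^ (-s) ∂μH[n] ≤ M := by
  choose M hM hle using fun q : Fin (n + 1) × SignType ↦
    exists_setLIntegral_ellipsoidPatch_le hx₁ hx hp hr₀ hr hs₀ hs q.1 q.2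
  refine ⟨∑ q, M q, ENNReal.sum_lt_top.2 fun q _ ↦ hM q, fun z ↦ ?_⟩
  set F : X → ℝ≥0∞ := fun w ↦ (∏ k, ‖x w k‖ₑ ^ (-r k)) * edist w z ^ (-s)
  calc ∫⁻ w in ellipsoid x p, F w ∂μH[n]
      ≤ ∫⁻ w in ⋃ q : Fin (n + 1) × SignType, ellipsoidPatch x p q.1 q.2, F w ∂μH[n] :=
        lintegral_mono_set (ellipsoid_subset_iUnion_ellipsoidPatch fun k ↦ (hp k).le)
    _ ≤ ∑' q : Fin (n + 1) × SignType, ∫⁻ w in ellipsoidPatch x p q.1 q.2, F w ∂μH[n] :=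
        lintegral_iUnion_le _ _
    _ ≤ ∑ q, M q := by
        rw [tsum_fintype]
        exact Finset.sum_le_sum fun q _ ↦ hle q z

end EllipsoidIntegral

section StrongConvexity

variable {p R : ℝ}

lemma continuous_absRpowDeriv (hp : 1 < p) : Continuous (absRpowDeriv p) := by
  have deriv_eq : deriv (fun t : ℝ ↦ |t| ^ p) = absRpowDeriv p :=
    funext fun t ↦ (hasDerivAt_abs_rpow_absRpowDeriv hp t).deriv
  exact deriv_eq ▸ (contDiff_norm_rpow (E := ℝ) hp).continuous_deriv_one

lemma absRpowDeriv_neg (p t : ℝ) : absRpowDeriv p (-t) = -absRpowDeriv p t := by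
  simp [absRpowDeriv]

lemma hasDerivAt_absRpowDeriv_of_pos {t : ℝ} (ht : 0 < t) :
    HasDerivAt (absRpowDeriv p) (p * (p - 1) * t ^ (p - 2)) t := by
  have eventually_eq : absRpowDeriv p =ᶠ[nhds t] fun t ↦ p * t ^ (p - 1) := by
    filter_upwards [lt_mem_nhds ht] with u hu
    rw [absRpowDeriv_eq_sign, abs_of_pos hu, Real.sign_of_pos hu, mul_one]
  have rpow_deriv := (Real.hasDerivAt_rpow_const (p := p - 1) (.inl ht.ne')).const_mul p
  exact (rpow_deriv.congr_of_eventuallyEq eventually_eq).congr_deriv (by ring_nf)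

lemma monotoneOn_absRpowDeriv_sub_Icc_zero (hp : 1 < p) (hp₂ : p ≤ 2) :
    MonotoneOn (fun t ↦ absRpowDeriv p t - p * (p - 1) * R ^ (p - 2) * t) (Icc 0 R) := by
  have hasDeriv {t : ℝ} (ht : t ∈ Ioo 0 R) :
      HasDerivAt (fun t ↦ absRpowDeriv p t - p * (p - 1) * R ^ (p - 2) * t)
        (p * (p - 1) * t ^ (p - 2) - p * (p - 1) * R ^ (p - 2)) t :=
    (hasDerivAt_absRpowDeriv_of_pos ht.1).sub (hasDerivAt_const_mul _)
  have continuous_sub : Continuous fun t ↦ absRpowDeriv p t - p * (p - 1) * R ^ (p - 2) * t :=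
    (continuous_absRpowDeriv hp).sub (continuous_const.mul continuous_id)
  refine monotoneOn_of_deriv_nonneg (convex_Icc 0 R) continuous_sub.continuousOn ?_ ?_ <;>
    rw [interior_Icc]
  · exact fun t ht ↦ (hasDeriv ht).differentiableAt.differentiableWithinAt
  · intro t ht
    rw [(hasDeriv ht).deriv, ← mul_sub]
    exact mul_nonneg (mul_nonneg (by linarith) (by linarith))
      (sub_nonneg.2 (Real.rpow_le_rpow_of_nonpos ht.1 ht.2.le (by linarith)))

lemma monotoneOn_absRpowDeriv_sub (hp : 1 < p) (hp₂ : p ≤ 2) (hR : 0 ≤ R) :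
    MonotoneOn (fun t ↦ absRpowDeriv p t - p * (p - 1) * R ^ (p - 2) * t) (Icc (-R) R) := by
  have mono_left :
      MonotoneOn (fun t ↦ absRpowDeriv p t - p * (p - 1) * R ^ (p - 2) * t) (Icc (-R) 0) := by
    intro s hs t ht hst
    have reflected := monotoneOn_absRpowDeriv_sub_Icc_zero (R := R) hp hp₂ (a := -t) (b := -s)
      ⟨by linarith [ht.2], by linarith [ht.1]⟩ ⟨by linarith [hs.2], by linarith [hs.1]⟩
      (by linarith)
    simp only [absRpowDeriv_neg] at reflected ⊢
    linarith
  simpa [Icc_union_Icc_eq_Icc, hR] using mono_left.union_right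
    (monotoneOn_absRpowDeriv_sub_Icc_zero hp hp₂) (isGreatest_Icc (by linarith)) (isLeast_Icc hR)

lemma tangent_le_of_convexOn {S : Set ℝ} {f : ℝ → ℝ} (hf : ConvexOn ℝ S f) {f' u t : ℝ} (hu : u ∈ S)
    (ht : t ∈ S) (hf' : HasDerivAt f f' u) : f u + f' * (t - u) ≤ f t := by
  rcases lt_trichotomy u t with hut | rfl | htu
  · have := hf.le_slope_of_hasDerivAt hu ht hut hf'
    rw [slope_def_field, le_div_iff₀ (sub_pos.2 hut)] at this
    linarith
  · simp
  · have := hf.slope_le_of_hasDerivAt ht hu htu hf'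
    rw [slope_def_field, div_le_iff₀ (sub_pos.2 htu)] at this
    linarith

lemma abs_rpow_add_absRpowDeriv_mul_add_sq_le (hp : 1 < p) (hp₂ : p ≤ 2) {u t : ℝ} (hu : |u| ≤ R)
    (ht : |t| ≤ R) :
    |u| ^ p + absRpowDeriv p u * (t - u) + p * (p - 1) / 2 * R ^ (p - 2) * (t - u) ^ 2
      ≤ |t| ^ p := by
  set c := p * (p - 1) * R ^ (p - 2)
  have hasDeriv (x : ℝ) :
      HasDerivAt (fun x ↦ |x| ^ p - c / 2 * x ^ 2) (absRpowDeriv p x - c * x) x :=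
    ((hasDerivAt_abs_rpow_absRpowDeriv hp x).sub
      ((hasDerivAt_pow 2 x).const_mul (c / 2))).congr_deriv (by norm_num; ring)
  have convex : ConvexOn ℝ (Icc (-R) R) fun x ↦ |x| ^ p - c / 2 * x ^ 2 := by
    refine MonotoneOn.convexOn_of_deriv (convex_Icc _ _)
      (fun x _ ↦ (hasDeriv x).continuousAt.continuousWithinAt)
      (fun x _ ↦ (hasDeriv x).differentiableAt.differentiableWithinAt) ?_
    rw [funext fun x ↦ (hasDeriv x).deriv]
    exact (monotoneOn_absRpowDeriv_sub hp hp₂ ((abs_nonneg u).trans hu)).mono interior_subset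
  linear_combination tangent_le_of_convexOn convex (abs_le.1 hu) (abs_le.1 ht) (hasDeriv u)

end StrongConvexity

section StrongSubgradient

variable {E : Type*} [NormedAddCommGroup E] [InnerProductSpace ℂ E] {c : ℝ} {S : Set E}
  {ρ : E → ℝ} {g : E → E}

/-- `g` selects on `S` a real subgradient of `ρ` with quadratic gain `c`; the real inner product of
the underlying real space is the real part of the complex one. -/
def IsStrongSubgradientOn (c : ℝ) (S : Set E) (ρ : E → ℝ) (g : E → E) : Prop :=
  ∀ x ∈ S, ∀ y ∈ S, ρ x + (inner ℂ (g x) (y - x)).re + c * ‖y - x‖ ^ 2 ≤ ρ y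

lemma re_inner_nonneg_of_norm_sub_le {a b : E} (h : ‖a - b‖ ≤ ‖b‖) : 0 ≤ (inner ℂ a b).re := by
  have expand := norm_sub_sq (𝕜 := ℂ) a b
  have := pow_le_pow_left₀ (norm_nonneg _) h 2
  rw [RCLike.re_to_complex] at expand
  nlinarith [sq_nonneg ‖a‖]

-- Adding the subgradient inequalities from `w` to `z'` and from `z'` to `z` telescopes `ρ z'`.
lemma IsStrongSubgradientOn.mul_dist_sq_le_re_inner (hg : IsStrongSubgradientOn c S ρ g)
    (hc : 0 ≤ c) {w z z' : E} (hw : w ∈ S) (hz : z ∈ S) (hz' : z' ∈ S) (hwz : ρ z ≤ ρ w)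
    (hin : 0 ≤ (inner ℂ (g z') (z - z')).re) :
    c / 2 * dist w z ^ 2 ≤ (inner ℂ (g w) (w - z')).re := by
  have from_w := hg w hw z' hz'
  have from_z' := hg z' hz' z hz
  have flip : (inner ℂ (g w) (z' - w)).re = -(inner ℂ (g w) (w - z')).re := by
    rw [← neg_sub, inner_neg_right, Complex.neg_re]
  have triangle : dist w z ^ 2 ≤ 2 * (‖z' - w‖ ^ 2 + ‖z - z'‖ ^ 2) := by
    rw [dist_comm, dist_eq_norm, ← sub_add_sub_cancel z z' w]
    have := norm_add_le (z - z') (z' - w)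
    nlinarith [norm_nonneg (z - z' + (z' - w)), sq_nonneg (‖z - z'‖ - ‖z' - w‖)]
  nlinarith [mul_le_mul_of_nonneg_left triangle hc]

end StrongSubgradient

lemma norm_inv_sub_inv_le {𝕜 : Type*} [NormedField 𝕜] {a b : 𝕜} {δ η β : ℝ} (hδ : 0 < δ)
    (ha : δ ≤ ‖a‖) (hb : δ ≤ ‖b‖) (hab : ‖a - b‖ ≤ η) (hβ₀ : 0 ≤ β) (hβ₁ : β ≤ 1) :
    ‖a⁻¹ - b⁻¹‖ ≤ 2 * η ^ β * δ ^ (-(1 + β)) := by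
  have hη : 0 ≤ η := (norm_nonneg _).trans hab
  have a_ne : a ≠ 0 := norm_pos_iff.1 (hδ.trans_le ha)
  have b_ne : b ≠ 0 := norm_pos_iff.1 (hδ.trans_le hb)
  have le_crude : ‖a⁻¹ - b⁻¹‖ ≤ 2 * δ⁻¹ := by
    calc ‖a⁻¹ - b⁻¹‖ ≤ ‖a‖⁻¹ + ‖b‖⁻¹ := by simpa using norm_sub_le a⁻¹ b⁻¹
      _ ≤ 2 * δ⁻¹ := by rw [two_mul]; gcongr
  have le_smooth : ‖a⁻¹ - b⁻¹‖ ≤ η * δ⁻¹ ^ 2 := by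
    calc ‖a⁻¹ - b⁻¹‖ = ‖a - b‖ * (‖a‖⁻¹ * ‖b‖⁻¹) := by
          rw [inv_sub_inv a_ne b_ne, norm_div, norm_mul, norm_sub_rev, div_eq_mul_inv, mul_inv]
      _ ≤ η * (δ⁻¹ * δ⁻¹) := by gcongr
      _ = η * δ⁻¹ ^ 2 := by rw [sq]
  calc ‖a⁻¹ - b⁻¹‖
      = ‖a⁻¹ - b⁻¹‖ ^ (1 - β) * ‖a⁻¹ - b⁻¹‖ ^ β := by
        rw [← Real.rpow_add_of_nonneg (norm_nonneg _) (by linarith) hβ₀, sub_add_cancel,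
          Real.rpow_one]
    _ ≤ (2 * δ⁻¹) ^ (1 - β) * (η * δ⁻¹ ^ 2) ^ β := by gcongr
    _ = 2 ^ (1 - β) * η ^ β * δ ^ (-(1 + β)) := by
        rw [Real.mul_rpow two_pos.le (by positivity), Real.mul_rpow hη (by positivity),
          ← Real.rpow_natCast_mul (by positivity), Real.inv_rpow hδ.le, Real.inv_rpow hδ.le,
          ← Real.rpow_neg hδ.le, ← Real.rpow_neg hδ.le, mul_mul_mul_comm, ← Real.rpow_add hδ]
        ring_nf
    _ ≤ 2 * η ^ β * δ ^ (-(1 + β)) := by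
        gcongr
        exact Real.rpow_le_self_of_one_le one_le_two (by linarith)

section RealCoords

/-- The coordinates `(u₁, v₁, u₂, v₂)` identifying `ℂ²` with `ℝ⁴`. -/
def realCoords (w : C2) : Fin 4 → ℝ := ![(w 0).re, (w 0).im, (w 1).re, (w 1).im]

lemma realCoords_sub (w z : C2) : realCoords (w - z) = realCoords w - realCoords z := by
  ext k
  fin_cases k <;> simp [realCoords]

lemma re_inner_eq_sum_realCoords (w z : C2) :
    (inner ℂ w z).re = ∑ k, realCoords w k * realCoords z k := by
  simp only [PiLp.inner_apply, RCLike.inner_apply, Fin.sum_univ_two, add_re, mul_re, conj_re,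
    conj_im, realCoords, Fin.sum_univ_four, Matrix.cons_val]
  ring

lemma norm_sq_eq_sum_realCoords (w : C2) : ‖w‖ ^ 2 = ∑ k, realCoords w k ^ 2 := by
  simp only [EuclideanSpace.norm_sq_eq, Complex.sq_norm, normSq_apply, Fin.sum_univ_two, realCoords,
    Fin.sum_univ_four, Matrix.cons_val]
  ring

lemma abs_realCoords_le_norm (w : C2) (k : Fin 4) : |realCoords w k| ≤ ‖w‖ := by
  refine abs_le_of_sq_le_sq ?_ (norm_nonneg w)
  rw [norm_sq_eq_sum_realCoords]
  exact Finset.single_le_sum (f := fun k ↦ realCoords w k ^ 2) (fun k _ ↦ sq_nonneg _)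
    (Finset.mem_univ k)

lemma lipschitzWith_realCoords : LipschitzWith 1 realCoords := by
  refine LipschitzWith.mk_one fun w z ↦ (dist_pi_le_iff dist_nonneg).2 fun k ↦ ?_
  rw [Real.dist_eq, ← Pi.sub_apply, ← realCoords_sub, dist_eq_norm]
  exact abs_realCoords_le_norm _ k

lemma antilipschitzWith_realCoords : AntilipschitzWith 2 realCoords := by
  refine AntilipschitzWith.of_le_mul_dist fun w z ↦ ?_
  rw [dist_eq_norm, dist_eq_norm, ← realCoords_sub]
  refine le_of_sq_le_sq ?_ (by positivity)
  calc ‖w - z‖ ^ 2 = ∑ k, realCoords (w - z) k ^ 2 := norm_sq_eq_sum_realCoords _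
    _ ≤ ∑ _k : Fin 4, ‖realCoords (w - z)‖ ^ 2 := by
        exact Finset.sum_le_sum fun k _ ↦ sq_le_sq.2
          ((norm_le_pi_norm (realCoords (w - z)) k).trans (le_abs_self _))
    _ = (((2 : ℝ≥0) : ℝ) * ‖realCoords (w - z)‖) ^ 2 := by norm_num; ring

end RealCoords

section Domain

/-- The exponents of the real coordinates in the defining function `ρ`. -/
def coordExponents (m : ℝ) : Fin 4 → ℝ := ![m, 2, 2, 2]

variable {m : ℝ}

lemma one_lt_coordExponents (hm : 1 < m) (k : Fin 4) : 1 < coordExponents m k := by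
  fin_cases k <;> simp [coordExponents, hm]

lemma coordExponents_le_two (hm : m ≤ 2) (k : Fin 4) : coordExponents m k ≤ 2 := by
  fin_cases k <;> simp [coordExponents, hm]

lemma rhom_eq_sum (m : ℝ) (w : C2) :
    rhom m w = ∑ k, |realCoords w k| ^ coordExponents m k - 1 := by
  simp only [rhom, Complex.sq_norm, normSq_apply, realCoords, coordExponents, Fin.sum_univ_four,
    Matrix.cons_val, Real.rpow_ofNat, sq_abs]
  ring

lemma bDm_eq_ellipsoid (m : ℝ) : bDm m = ellipsoid realCoords (coordExponents m) := by
  ext w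
  simp [bDm, ellipsoid, rhom_eq_sum, sub_eq_zero]

lemma realCoords_gradRhom (m : ℝ) (w : C2) (k : Fin 4) :
    realCoords (gradRhom m w) k = absRpowDeriv (coordExponents m k) (realCoords w k) := by
  fin_cases k <;>
    simp [realCoords, gradRhom, coordExponents, absRpowDeriv_two, absRpowDeriv_eq_sign m]

lemma Deltam_eq_inner (m : ℝ) (w z : C2) :
    Deltam m w z = inner ℂ (gradRhom m w) (w - z) / 2 := by
  simp only [Deltam, gradRhom, WithLp.equiv_symm_apply, PiLp.inner_apply, PiLp.sub_apply,
    RCLike.inner_apply, Fin.sum_univ_two, Matrix.cons_val_zero, Matrix.cons_val_one,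
    Matrix.cons_val_fin_one, map_add, map_mul, conj_ofReal, conj_ofNat, conj_I, ofReal_mul,
    ofReal_div, ofReal_ofNat]
  ring

lemma norm_le_one_of_mem_bDm (hm : 1 < m) (hm₂ : m ≤ 2) {w : C2} (hw : w ∈ bDm m) : ‖w‖ ≤ 1 := by
  rw [bDm_eq_ellipsoid] at hw
  rw [← sq_le_one_iff₀ (norm_nonneg w), norm_sq_eq_sum_realCoords, ← show _ = (1 : ℝ) from hw]
  refine Finset.sum_le_sum fun k _ ↦ ?_
  rw [← sq_abs, ← Real.rpow_two]
  exact Real.rpow_le_rpow_of_exponent_ge' (abs_nonneg _)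
    (abs_le_one_of_mem_ellipsoid (fun k ↦ one_pos.trans (one_lt_coordExponents hm k)) hw k)
    (one_pos.trans (one_lt_coordExponents hm k)).le (coordExponents_le_two hm₂ k)

lemma isStrongSubgradientOn_gradRhom (hm : 1 < m) (hm₂ : m ≤ 2) {R : ℝ} (hR : 1 ≤ R) :
    IsStrongSubgradientOn (m * (m - 1) / 2 * R ^ (m - 2)) (closedBall 0 R) (rhom m)
      (gradRhom m) := by
  set c := m * (m - 1) / 2 * R ^ (m - 2)
  have c_le (k : Fin 4) :
      c ≤ coordExponents m k * (coordExponents m k - 1) / 2 * R ^ (coordExponents m k - 2) := by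
    have rpow_le_one : R ^ (m - 2) ≤ 1 := Real.rpow_le_one_of_one_le_of_nonpos hR (by linarith)
    have c_le_one : c ≤ 1 := mul_le_one₀ (by nlinarith) (by positivity) rpow_le_one
    fin_cases k <;> norm_num [coordExponents, c_le_one, c] at c_le_one ⊢
  intro w hw z hz
  rw [mem_closedBall_zero_iff] at hw hz
  have coord_le (k : Fin 4) := abs_rpow_add_absRpowDeriv_mul_add_sq_le (one_lt_coordExponents hm k)
    (coordExponents_le_two hm₂ k) ((abs_realCoords_le_norm w k).trans hw)
    ((abs_realCoords_le_norm z k).trans hz)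
  have sum_le := Finset.sum_le_sum fun k (_ : k ∈ Finset.univ) ↦
    (add_le_add_right (mul_le_mul_of_nonneg_right (c_le k)
      (sq_nonneg (realCoords z k - realCoords w k))) _).trans (coord_le k)
  simp only [Finset.sum_add_distrib, ← Finset.mul_sum, ← Pi.sub_apply, ← realCoords_sub,
    ← realCoords_gradRhom, ← re_inner_eq_sum_realCoords, ← norm_sq_eq_sum_realCoords] at sum_le
  rw [rhom_eq_sum, rhom_eq_sum]
  linarith

lemma one_le_norm_gradRhom (hm : 1 < m) (hm₂ : m ≤ 2) {z : C2} (hz : z ∈ bDm m) :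
    1 ≤ ‖gradRhom m z‖ := by
  have norm_le := norm_le_one_of_mem_bDm hm hm₂ hz
  have rhom_zero : rhom m 0 = -1 := by simp [rhom, Real.zero_rpow (by linarith : m ≠ 0)]
  have tangent := isStrongSubgradientOn_gradRhom hm hm₂ le_rfl z (mem_closedBall_zero_iff.2 norm_le)
    0 (mem_closedBall_self zero_le_one)
  rw [show rhom m z = 0 from hz, rhom_zero, zero_sub, inner_neg_right, Complex.neg_re,
    Real.one_rpow] at tangent
  calc 1 ≤ (inner ℂ (gradRhom m z) z).re := by
        nlinarith [sq_nonneg ‖-z‖, mul_nonneg (by linarith : 0 ≤ m) (by linarith : 0 ≤ m - 1)]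
    _ ≤ ‖gradRhom m z‖ * ‖z‖ :=
        (Complex.re_le_norm _).trans (norm_inner_le_norm _ _)
    _ ≤ ‖gradRhom m z‖ := mul_le_of_le_one_right (norm_nonneg _) norm_le

lemma continuous_gradRhom (hm : 1 < m) : Continuous (gradRhom m) := by
  have isInducing_realCoords := (antilipschitzWith_realCoords.isUniformInducing
    lipschitzWith_realCoords.uniformContinuous).isInducing
  refine isInducing_realCoords.continuous_iff.2 (continuous_pi fun k ↦ ?_)
  simp only [Function.comp_apply, realCoords_gradRhom]
  exact (continuous_absRpowDeriv (one_lt_coordExponents hm k)).comp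
    ((continuous_apply k).comp lipschitzWith_realCoords.continuous)

lemma norm_Nm_le_one (m : ℝ) (z : C2) : ‖Nm m z‖ ≤ 1 := by
  rw [Nm, norm_smul, norm_neg, norm_inv, norm_norm]
  exact inv_mul_le_one

lemma dist_add_smul_Nm_le (m : ℝ) (z : C2) {ε : ℝ} (hε : 0 ≤ ε) :
    dist (z + ε • Nm m z) z ≤ ε := by
  rw [dist_self_add_left, norm_smul, Real.norm_of_nonneg hε]
  exact mul_le_of_le_one_right hε (norm_Nm_le_one m z)

lemma exists_re_inner_gradRhom_add_smul_Nm_nonneg (hm : 1 < m) (hm₂ : m ≤ 2) :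
    ∃ ε₀ : ℝ, 0 < ε₀ ∧ ∀ z ∈ bDm m, ∀ ε, 0 ≤ ε → ε < ε₀ → z + ε • Nm m z ∈ closedBall 0 2 ∧
      0 ≤ (inner ℂ (gradRhom m (z + ε • Nm m z)) (z - (z + ε • Nm m z))).re := by
  obtain ⟨δ, hδ, uniform⟩ := Metric.uniformContinuousOn_iff_le.1
    ((isCompact_closedBall (0 : C2) 2).uniformContinuousOn_of_continuous
      (continuous_gradRhom hm).continuousOn) 1 one_pos
  refine ⟨min 1 δ, lt_min one_pos hδ, fun z hz ε hε hεδ ↦ ?_⟩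
  have norm_le := norm_le_one_of_mem_bDm hm hm₂ hz
  have dist_le := dist_add_smul_Nm_le m z hε
  have mem_ball : z + ε • Nm m z ∈ closedBall 0 2 := by
    rw [mem_closedBall]
    have := dist_triangle (z + ε • Nm m z) z 0
    rw [dist_zero_right z] at this
    linarith [min_le_left 1 δ]
  refine ⟨mem_ball, ?_⟩
  have displacement_eq :
      z - (z + ε • Nm m z) = ((ε * ‖gradRhom m z‖⁻¹ : ℝ) : ℂ) • gradRhom m z := by
    rw [Nm, sub_add_cancel_left, smul_smul, mul_neg, neg_smul, neg_neg, Complex.coe_smul]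
  have grad_close : ‖gradRhom m (z + ε • Nm m z) - gradRhom m z‖ ≤ ‖gradRhom m z‖ := by
    refine le_trans ?_ (one_le_norm_gradRhom hm hm₂ hz)
    rw [← dist_eq_norm]
    exact uniform _ mem_ball _ (mem_closedBall_zero_iff.2 (by linarith))
      (dist_le.trans (hεδ.le.trans (min_le_right 1 δ)))
  rw [displacement_eq, inner_smul_right, Complex.re_ofReal_mul]
  exact mul_nonneg (by positivity) (re_inner_nonneg_of_norm_sub_le grad_close)

lemma exists_mul_dist_sq_le_re_Deltam (hm : 1 < m) (hm₂ : m ≤ 2) :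
    ∃ κ > 0, ∃ ε₀ : ℝ, 0 < ε₀ ∧ ∀ w ∈ bDm m, ∀ z ∈ bDm m, ∀ ε, 0 ≤ ε → ε < ε₀ →
      κ * dist w z ^ 2 ≤ (Deltam m w (z + ε • Nm m z)).re := by
  obtain ⟨ε₀, hε₀, inward⟩ := exists_re_inner_gradRhom_add_smul_Nm_nonneg hm hm₂
  set c : ℝ := m * (m - 1) / 2 * 2 ^ (m - 2)
  have hc : 0 < c := by have := sub_pos.2 hm; positivity
  have mem_ball {w : C2} (hw : w ∈ bDm m) : w ∈ closedBall 0 2 :=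
    mem_closedBall_zero_iff.2 ((norm_le_one_of_mem_bDm hm hm₂ hw).trans one_le_two)
  refine ⟨c / 4, by positivity, ε₀, hε₀, fun w hw z hz ε hε hεε₀ ↦ ?_⟩
  obtain ⟨mem_ball', inward_nonneg⟩ := inward z hz ε hε hεε₀
  have inner_ge : c / 2 * dist w z ^ 2 ≤ (inner ℂ (gradRhom m w) (w - (z + ε • Nm m z))).re :=
    (isStrongSubgradientOn_gradRhom hm hm₂ one_le_two).mul_dist_sq_le_re_inner hc.le
      (mem_ball hw) (mem_ball hz) mem_ball' (Eq.trans hz hw.symm).le inward_nonneg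
  rw [Deltam_eq_inner, Complex.div_ofNat_re]
  linarith

lemma exists_norm_Deltam_sub_le (hm : 1 < m) (hm₂ : m ≤ 2) :
    ∃ L : ℝ, 0 < L ∧ ∀ w ∈ bDm m, ∀ z ε, 0 ≤ ε →
      ‖Deltam m w (z + ε • Nm m z) - Deltam m w z‖ ≤ L * ε := by
  obtain ⟨L, hL₀, hL⟩ := ((isCompact_closedBall (0 : C2) 1).image
    (continuous_gradRhom hm)).isBounded.exists_pos_norm_le
  have norm_grad_le {w : C2} (hw : w ∈ bDm m) : ‖gradRhom m w‖ ≤ L :=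
    hL _ (mem_image_of_mem _ (mem_closedBall_zero_iff.2 (norm_le_one_of_mem_bDm hm hm₂ hw)))
  refine ⟨L, hL₀, fun w hw z ε hε ↦ ?_⟩
  calc ‖Deltam m w (z + ε • Nm m z) - Deltam m w z‖
      = ‖inner ℂ (gradRhom m w) (z - (z + ε • Nm m z))‖ / 2 := by
        rw [Deltam_eq_inner, Deltam_eq_inner, ← sub_div, ← inner_sub_right, norm_div,
          sub_sub_sub_cancel_left, Complex.norm_ofNat]
    _ ≤ ‖gradRhom m w‖ * ‖z - (z + ε • Nm m z)‖ := by
        linarith [norm_inner_le_norm (𝕜 := ℂ) (gradRhom m w) (z - (z + ε • Nm m z)),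
          norm_nonneg (inner ℂ (gradRhom m w) (z - (z + ε • Nm m z)))]
    _ ≤ L * ε := by
        rw [← dist_eq_norm, dist_comm]
        exact mul_le_mul (norm_grad_le hw) (dist_add_smul_Nm_le m z hε) dist_nonneg hL₀.le

lemma exists_inv_Deltam_sub_inv_le (hm : 1 < m) (hm₂ : m ≤ 2) {β : ℝ} (hβ₀ : 0 ≤ β)
    (hβ₁ : β ≤ 1) :
    ∃ C ε₀ : ℝ, 0 < C ∧ 0 < ε₀ ∧ ∀ w ∈ bDm m, ∀ z ∈ bDm m, ∀ ε, 0 < ε → ε < ε₀ →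
      (if Deltam m w z = 0 ∨ Deltam m w (z + ε • Nm m z) = 0 then (⊤ : ℝ≥0∞)
        else ENNReal.ofReal ‖(Deltam m w (z + ε • Nm m z))⁻¹ - (Deltam m w z)⁻¹‖) ≤
      ENNReal.ofReal (C * ε ^ β) * edist w z ^ (-(2 + 2 * β)) := by
  obtain ⟨κ, hκ, ε₀, hε₀, lower⟩ := exists_mul_dist_sq_le_re_Deltam hm hm₂
  obtain ⟨L, hL, upper⟩ := exists_norm_Deltam_sub_le hm hm₂
  refine ⟨2 * L ^ β * κ ^ (-(1 + β)), ε₀, by positivity, hε₀, fun w hw z hz ε hε hεε₀ ↦ ?_⟩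
  rcases eq_or_ne w z with rfl | hwz
  · rw [edist_self, ENNReal.zero_rpow_of_neg (by linarith), ENNReal.mul_top (by positivity)]
    exact le_top
  have dist_pos := dist_pos.2 hwz
  have gap_pos : 0 < κ * dist w z ^ 2 := by positivity
  have le_norm_Deltam (ε) (hε : 0 ≤ ε) (hεε₀ : ε < ε₀) :
      κ * dist w z ^ 2 ≤ ‖Deltam m w (z + ε • Nm m z)‖ :=
    (lower w hw z hz ε hε hεε₀).trans (Complex.re_le_norm _)
  have le_displaced := le_norm_Deltam ε hε.le hεε₀
  have le_undisplaced : κ * dist w z ^ 2 ≤ ‖Deltam m w z‖ := by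
    simpa using le_norm_Deltam 0 le_rfl hε₀
  have not_singular : ¬(Deltam m w z = 0 ∨ Deltam m w (z + ε • Nm m z) = 0) := not_or.2
    ⟨norm_pos_iff.1 (gap_pos.trans_le le_undisplaced),
      norm_pos_iff.1 (gap_pos.trans_le le_displaced)⟩
  rw [if_neg not_singular, edist_dist, ENNReal.ofReal_rpow_of_pos dist_pos,
    ← ENNReal.ofReal_mul (by positivity)]
  refine ENNReal.ofReal_le_ofReal ((norm_inv_sub_inv_le gap_pos le_displaced le_undisplaced
    (upper w hw z ε hε.le) hβ₀ hβ₁).trans_eq ?_)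
  rw [Real.mul_rpow hL.le hε.le, Real.mul_rpow hκ.le (by positivity),
    ← Real.rpow_natCast_mul dist_pos.le]
  push_cast
  ring_nf

lemma exists_setLIntegral_bDm_le (hm : 1 < m) (hm₂ : m ≤ 2) {s : ℝ} (hs₀ : 0 ≤ s)
    (hs : s < m + 1) :
    ∃ M : ℝ≥0∞, M < ⊤ ∧ ∀ z, ∫⁻ w in bDm m,
      ENNReal.ofReal |(w 0).re| ^ (m - 2) * edist w z ^ (-s) ∂μH[3] ≤ M := by
  set r : Fin 4 → ℝ := ![2 - m, 0, 0, 0]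
  have r_nonneg (k : Fin 4) : 0 ≤ r k := by fin_cases k <;> simp [r, hm₂]
  have r_lt_one (k : Fin 4) : r k < 1 := by
    have hr : 2 - m < 1 := by linarith
    fin_cases k <;> simp [r, hr, -sub_lt_self_iff]
  have room : s < (3 : ℕ) - ∑ k, r k := by
    have sum_eq : ∑ k, r k = 2 - m := by simp [r, Fin.sum_univ_four]
    rw [sum_eq]
    push_cast
    linarith
  have weight_eq (w : C2) :
      ∏ k, ‖realCoords w k‖ₑ ^ (-r k) = ENNReal.ofReal |(w 0).re| ^ (m - 2) := by
    simp [Fin.prod_univ_four, r, realCoords, Real.enorm_eq_ofReal_abs]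
  simpa only [weight_eq, bDm_eq_ellipsoid, Nat.cast_ofNat] using
    exists_setLIntegral_ellipsoid_le lipschitzWith_realCoords antilipschitzWith_realCoords
      (one_lt_coordExponents hm) r_nonneg r_lt_one hs₀ room

end Domain

theorem stmt16_general (m β : ℝ) (hm1 : 1 < m) (hm2 : m ≤ 2)
    (hβ0 : 0 ≤ β) (hβ : β < (m - 1) / 2) :
    ∃ C ε₀ : ℝ, 0 < ε₀ ∧ ∀ z ∈ bDm m, ∀ ε : ℝ, 0 < ε → ε < ε₀ →
      ∫⁻ w in bDm m,
          (ENNReal.ofReal |(w 0).re|) ^ (m - 2) *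
            (if Deltam m w z = 0 ∨ Deltam m w (z + ε • Nm m z) = 0 then (⊤ : ℝ≥0∞)
              else ENNReal.ofReal
                ‖(Deltam m w (z + ε • Nm m z))⁻¹ - (Deltam m w z)⁻¹‖) ∂μH[3]
        ≤ ENNReal.ofReal (C * ε ^ β) := by
  obtain ⟨C, ε₀, hC, hε₀, kernel_le⟩ :=
    exists_inv_Deltam_sub_inv_le hm1 hm2 hβ0 (by linarith)
  obtain ⟨M, hM, potential_le⟩ := exists_setLIntegral_bDm_le hm1 hm2
    (by linarith : 0 ≤ 2 + 2 * β) (by linarith)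
  have measurable_bDm : MeasurableSet (bDm m) := bDm_eq_ellipsoid m ▸
    (isClosed_ellipsoid lipschitzWith_realCoords.continuous fun k ↦
      one_pos.trans (one_lt_coordExponents hm1 k)).measurableSet
  refine ⟨C * M.toReal, ε₀, hε₀, fun z hz ε hε hεε₀ ↦ ?_⟩
  calc _ ≤ ∫⁻ w in bDm m, ENNReal.ofReal (C * ε ^ β) *
          (ENNReal.ofReal |(w 0).re| ^ (m - 2) * edist w z ^ (-(2 + 2 * β))) ∂μH[3] := by
        refine setLIntegral_mono' measurable_bDm fun w hw ↦ ?_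
        rw [mul_left_comm]
        exact mul_le_mul_right (kernel_le w hw z hz ε hε hεε₀) _
    _ ≤ ENNReal.ofReal (C * ε ^ β) * M := by
        rw [lintegral_const_mul' _ _ ENNReal.ofReal_ne_top]
        exact mul_le_mul_right (potential_le z) _
    _ = ENNReal.ofReal (C * M.toReal * ε ^ β) := by
        rw [mul_right_comm, ENNReal.ofReal_mul (p := C * ε ^ β) (by positivity),
          ENNReal.ofReal_toReal hM.ne]

/-- Fix `3/2 < m < 2` and `0 < β < (m−1)/2`. There are `C < ∞`, `ε₀ > 0` such that for every
`z ∈ bD_m` and `0 < ε < ε₀`: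
`∫_{bD_m} |Re w₁|^{m−2}·|Δ(w, z+εN(z))⁻¹ − Δ(w,z)⁻¹| dH³(w) ≤ C·ε^β`
(the integrand is `+∞` where singular, e.g. at `w = z`). -/
theorem stmt16 (m β : ℝ) (hm1 : 3 / 2 < m) (hm2 : m < 2)
    (hβ0 : 0 < β) (hβ : β < (m - 1) / 2) :
    ∃ C ε₀ : ℝ, 0 < ε₀ ∧ ∀ z ∈ bDm m, ∀ ε : ℝ, 0 < ε → ε < ε₀ →
      ∫⁻ w in bDm m,
          (ENNReal.ofReal |(w 0).re|) ^ (m - 2) *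
            (if Deltam m w z = 0 ∨ Deltam m w (z + ε • Nm m z) = 0 then (⊤ : ℝ≥0∞)
              else ENNReal.ofReal
                ‖(Deltam m w (z + ε • Nm m z))⁻¹ - (Deltam m w z)⁻¹‖) ∂μH[3]
        ≤ ENNReal.ofReal (C * ε ^ β) :=
  stmt16_general m β (by linarith) hm2.le hβ0.le hβ

end
end

section
/- For every α ∈ (0,1] and every β with 0 ≤ β < α/2 there is a constant A_{α,β} < ∞ such that for every x₁ ∈ ℝ with |x₁| ≤ 1: ∫∫∫_{{(u₁,u₂,v₂)∈ℝ³ : u₁²+u₂²+v₂²<1}} |u₁−x₁|^{−1+α} · (u₁²+u₂²+v₂²)^{−(1+β)} du₁ du₂ dv₂ ≤ A_{α,β}; the constant A_{α,β} is independent of x₁. -/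
open MeasureTheory
open scoped ENNReal

/-!
Split the homogeneity of `‖z‖ ^ q`, `z = (u, w) ∈ E × F`, as `q = a + b` with `a, b ≤ 0`, so that
`‖z‖ ^ q ≤ ‖u‖ ^ a * ‖w‖ ^ b`. The two singularities in the variable `u` then merge, because
`‖u - x‖ ^ p * ‖u‖ ^ a ≤ ‖u - x‖ ^ (p + a) + ‖u‖ ^ (p + a)`, and the variables separate. Each
remaining factor is a translate of `‖·‖ ^ s` with `s` above minus the dimension, whose integral over
a set of finite measure is bounded independently of the translation: it is integrable within
distance `1` of its pole and at most `1` elsewhere. The theorem is the case `E = ℝ`, `F = ℝ × ℝ`,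
`p = α - 1`, `q = -2 (1 + β)`: there `-(dim E + dim F) < p + q` reads `β < α / 2`.
-/

section NonposPowers

variable {x y : ℝ≥0∞} {a b : ℝ}

lemma ennreal_rpow_le_rpow_of_nonpos (ha : a ≤ 0) (hxy : x ≤ y) : y ^ a ≤ x ^ a := by
  rw [← neg_neg a, ENNReal.rpow_neg, ENNReal.rpow_neg x]
  gcongr
  exact neg_nonneg.2 ha

lemma ennreal_rpow_add_of_nonpos (ha : a ≤ 0) (hb : b ≤ 0) : x ^ (a + b) = x ^ a * x ^ b := by
  have rpow_eq_inv_rpow_neg (c : ℝ) : x ^ c = x⁻¹ ^ (-c) := by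
    rw [ENNReal.inv_rpow, ENNReal.rpow_neg, inv_inv]
  simp only [rpow_eq_inv_rpow_neg, neg_add]
  exact ENNReal.rpow_add_of_nonneg _ _ (neg_nonneg.2 ha) (neg_nonneg.2 hb)

lemma ennreal_rpow_mul_rpow_le_add_of_nonpos (ha : a ≤ 0) (hb : b ≤ 0) :
    x ^ a * y ^ b ≤ x ^ (a + b) + y ^ (a + b) := by
  simp only [ennreal_rpow_add_of_nonpos ha hb]
  rcases le_total x y with hxy | hyx
  · calc x ^ a * y ^ b ≤ x ^ a * x ^ b := mul_le_mul_right (ennreal_rpow_le_rpow_of_nonpos hb hxy) _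
      _ ≤ _ := le_self_add
  · calc x ^ a * y ^ b ≤ y ^ a * y ^ b := mul_le_mul_left (ennreal_rpow_le_rpow_of_nonpos ha hyx) _
      _ ≤ _ := le_add_self

end NonposPowers

lemma exists_nonpos_add_eq_of_neg_add_lt {m n q : ℝ} (hm : 0 < m) (hn : 0 < n) (hq : q ≤ 0)
    (hmnq : -(m + n) < q) : ∃ a ≤ 0, ∃ b ≤ 0, a + b = q ∧ -m < a ∧ -n < b := by
  have hmn : 0 < m + n := add_pos hm hn
  have hratio : -1 < q / (m + n) := by rwa [lt_div_iff₀ hmn, neg_one_mul]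
  have hratio_nonpos : q / (m + n) ≤ 0 := div_nonpos_of_nonpos_of_nonneg hq hmn.le
  refine ⟨q / (m + n) * m, mul_nonpos_of_nonpos_of_nonneg hratio_nonpos hm.le,
    q / (m + n) * n, mul_nonpos_of_nonpos_of_nonneg hratio_nonpos hn.le, ?_, ?_, ?_⟩
  · rw [← mul_add, div_mul_cancel₀ q hmn.ne']
  · nlinarith
  · nlinarith

lemma enorm_fst_sub_rpow_mul_enorm_rpow_le {E F : Type*} [NormedAddCommGroup E]
    [NormedAddCommGroup F] {p a b : ℝ} (hp : p ≤ 0) (ha : a ≤ 0) (hb : b ≤ 0) (x : E) (z : E × F) :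
    ‖z.1 - x‖ₑ ^ p * ‖z‖ₑ ^ (a + b) ≤
      (‖z.1 - x‖ₑ ^ (p + a) + ‖z.1‖ₑ ^ (p + a)) * ‖z.2‖ₑ ^ b := by
  have hfst : ‖z.1‖ₑ ≤ ‖z‖ₑ := enorm_le_iff_norm_le.2 (norm_fst_le z)
  have hsnd : ‖z.2‖ₑ ≤ ‖z‖ₑ := enorm_le_iff_norm_le.2 (norm_snd_le z)
  calc ‖z.1 - x‖ₑ ^ p * ‖z‖ₑ ^ (a + b)
      = ‖z.1 - x‖ₑ ^ p * (‖z‖ₑ ^ a * ‖z‖ₑ ^ b) := by rw [ennreal_rpow_add_of_nonpos ha hb]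
    _ ≤ ‖z.1 - x‖ₑ ^ p * (‖z.1‖ₑ ^ a * ‖z.2‖ₑ ^ b) :=
      mul_le_mul_right (mul_le_mul' (ennreal_rpow_le_rpow_of_nonpos ha hfst)
        (ennreal_rpow_le_rpow_of_nonpos hb hsnd)) _
    _ = ‖z.1 - x‖ₑ ^ p * ‖z.1‖ₑ ^ a * ‖z.2‖ₑ ^ b := (mul_assoc _ _ _).symm
    _ ≤ _ := by
      gcongr
      exact ennreal_rpow_mul_rpow_le_add_of_nonpos hp ha

lemma setLIntegral_enorm_sub_rpow_le {E : Type*} [NormedAddCommGroup E] [MeasurableSpace E]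
    [BorelSpace E] (μ : Measure E) [μ.IsAddRightInvariant] {p : ℝ} (hp : p ≤ 0) (S : Set E)
    (x : E) :
    ∫⁻ u in S, ‖u - x‖ₑ ^ p ∂μ ≤ ∫⁻ w in Metric.ball (0 : E) 1, ‖w‖ₑ ^ p ∂μ + μ S := by
  set g : E → ℝ≥0∞ := (Metric.ball (0 : E) 1).indicator fun w ↦ ‖w‖ₑ ^ p
  have enorm_rpow_le (w : E) : ‖w‖ₑ ^ p ≤ g w + 1 := by
    by_cases hw : w ∈ Metric.ball (0 : E) 1
    · simp [g, hw]
    · have one_le : 1 ≤ ‖w‖ₑ := by simpa [← ofReal_norm] using hw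
      calc ‖w‖ₑ ^ p ≤ 1 ^ p := ennreal_rpow_le_rpow_of_nonpos hp one_le
        _ ≤ g w + 1 := by simp
  calc ∫⁻ u in S, ‖u - x‖ₑ ^ p ∂μ
      ≤ ∫⁻ u in S, (g (u - x) + 1) ∂μ := lintegral_mono fun u ↦ enorm_rpow_le (u - x)
    _ = ∫⁻ u in S, g (u - x) ∂μ + μ S := by
      rw [lintegral_add_right _ measurable_const, setLIntegral_one]
    _ ≤ ∫⁻ u, g (u - x) ∂μ + μ S := by gcongr; exact Measure.restrict_le_self
    _ = ∫⁻ w in Metric.ball (0 : E) 1, ‖w‖ₑ ^ p ∂μ + μ S := by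
      rw [lintegral_sub_right_eq_self, lintegral_indicator measurableSet_ball]

section AddHaar

open Metric Module

variable {E F : Type*}
  [NormedAddCommGroup E] [NormedSpace ℝ E] [FiniteDimensional ℝ E]
  [MeasurableSpace E] [BorelSpace E]
  [NormedAddCommGroup F] [NormedSpace ℝ F] [FiniteDimensional ℝ F]
  [MeasurableSpace F] [BorelSpace F]
  (μ : Measure E) [μ.IsAddHaarMeasure] (ν : Measure F) [ν.IsAddHaarMeasure]

lemma setLIntegral_ball_enorm_rpow_lt_top [Nontrivial E] {p : ℝ} (hp : -(finrank ℝ E : ℝ) < p)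
    (r : ℝ) : ∫⁻ w in ball (0 : E) r, ‖w‖ₑ ^ p ∂μ < ∞ := by
  have hint : IntegrableOn (fun w : E ↦ ‖w‖ ^ p) (ball 0 r) μ :=
    integrableOn_ball_of_norm_le_rpow (C := 1) (α := -p) finrank_pos (by linarith)
      (.of_forall fun w ↦ by simp [abs_of_nonneg (Real.rpow_nonneg (norm_nonneg w) p)])
      (by fun_prop : Measurable fun w : E ↦ ‖w‖ ^ p).aestronglyMeasurable
  refine lt_of_eq_of_lt (lintegral_congr_ae ?_) hint.hasFiniteIntegral
  -- At the origin the two sides differ when `p < 0`: `(0 : ℝ≥0∞) ^ p = ∞`, but `(0 : ℝ) ^ p = 0`.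
  filter_upwards [ae_restrict_of_ae (Measure.ae_ne μ 0)] with w hw
  have hw_pos : 0 < ‖w‖ := norm_pos_iff.2 hw
  rw [Real.enorm_of_nonneg (Real.rpow_nonneg hw_pos.le p), ← ENNReal.ofReal_rpow_of_pos hw_pos,
    ofReal_norm]

theorem exists_setLIntegral_enorm_fst_sub_rpow_mul_enorm_rpow_le [Nontrivial E] [Nontrivial F]
    {S : Set E} {T : Set F} (hS : μ S ≠ ∞) (hT : ν T ≠ ∞) {p q : ℝ} (hp : p ≤ 0) (hq : q ≤ 0)
    (hpE : -(finrank ℝ E : ℝ) < p) (hpq : -(finrank ℝ E + finrank ℝ F : ℝ) < p + q) :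
    ∃ C ≠ ∞, ∀ x : E,
      ∫⁻ z in S ×ˢ T, ‖z.1 - x‖ₑ ^ p * ‖z‖ₑ ^ q ∂(μ.prod ν) ≤ C := by
  obtain ⟨a, ha, b, hb, rfl, hpa, hbF⟩ := exists_nonpos_add_eq_of_neg_add_lt
    (m := finrank ℝ E + p) (n := finrank ℝ F) (by linarith) (mod_cast finrank_pos) hq (by linarith)
  set K : ℝ≥0∞ := ∫⁻ w in ball (0 : E) 1, ‖w‖ₑ ^ (p + a) ∂μ + μ S
  set L : ℝ≥0∞ := ∫⁻ w in ball (0 : F) 1, ‖w‖ₑ ^ b ∂ν + ν T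
  have hK : K ≠ ∞ :=
    ENNReal.add_ne_top.2 ⟨(setLIntegral_ball_enorm_rpow_lt_top μ (by linarith) 1).ne, hS⟩
  have hL : L ≠ ∞ := ENNReal.add_ne_top.2 ⟨(setLIntegral_ball_enorm_rpow_lt_top ν hbF 1).ne, hT⟩
  have le_K (y : E) : ∫⁻ u in S, ‖u - y‖ₑ ^ (p + a) ∂μ ≤ K :=
    setLIntegral_enorm_sub_rpow_le μ (add_nonpos hp ha) S y
  have le_L : ∫⁻ w in T, ‖w‖ₑ ^ b ∂ν ≤ L := by
    simpa only [sub_zero] using setLIntegral_enorm_sub_rpow_le ν hb T 0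
  refine ⟨(K + K) * L, by finiteness, fun x ↦ ?_⟩
  calc ∫⁻ z in S ×ˢ T, ‖z.1 - x‖ₑ ^ p * ‖z‖ₑ ^ (a + b) ∂(μ.prod ν)
      ≤ ∫⁻ z in S ×ˢ T, (‖z.1 - x‖ₑ ^ (p + a) + ‖z.1‖ₑ ^ (p + a)) * ‖z.2‖ₑ ^ b ∂(μ.prod ν) :=
        lintegral_mono (enorm_fst_sub_rpow_mul_enorm_rpow_le hp ha hb x)
    _ = (∫⁻ u in S, (‖u - x‖ₑ ^ (p + a) + ‖u‖ₑ ^ (p + a)) ∂μ) * ∫⁻ w in T, ‖w‖ₑ ^ b ∂ν := by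
      rw [← Measure.prod_restrict, ← lintegral_prod_mul (by fun_prop) (by fun_prop)]
    _ = (∫⁻ u in S, ‖u - x‖ₑ ^ (p + a) ∂μ + ∫⁻ u in S, ‖u‖ₑ ^ (p + a) ∂μ) *
          ∫⁻ w in T, ‖w‖ₑ ^ b ∂ν := by
      rw [lintegral_add_left (by fun_prop)]
    _ ≤ (K + K) * L := by
      gcongr
      · exact le_K x
      · simpa only [sub_zero] using le_K 0

end AddHaar

lemma norm_le_sqrt_sum_sq (p : ℝ × ℝ × ℝ) : ‖p‖ ≤ √(p.1 ^ 2 + p.2.1 ^ 2 + p.2.2 ^ 2) := by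
  simp only [norm_prod_le_iff, Real.norm_eq_abs]
  refine ⟨Real.abs_le_sqrt ?_, Real.abs_le_sqrt ?_, Real.abs_le_sqrt ?_⟩ <;>
    linarith [sq_nonneg p.1, sq_nonneg p.2.1, sq_nonneg p.2.2]

lemma setOf_sum_sq_lt_one_subset_ball_prod_ball :
    {p : ℝ × ℝ × ℝ | p.1 ^ 2 + p.2.1 ^ 2 + p.2.2 ^ 2 < 1} ⊆ Metric.ball 0 1 ×ˢ Metric.ball 0 1 := by
  intro p hp
  have hnorm : ‖p‖ < 1 :=
    (norm_le_sqrt_sum_sq p).trans_lt ((Real.sqrt_lt' one_pos).2 (by simpa using hp))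
  rwa [ball_prod_same, Prod.mk_zero_zero, mem_ball_zero_iff]

lemma ofReal_sum_sq_rpow_le_enorm_rpow {s : ℝ} (hs : s ≤ 0) (p : ℝ × ℝ × ℝ) :
    ENNReal.ofReal (p.1 ^ 2 + p.2.1 ^ 2 + p.2.2 ^ 2) ^ s ≤ ‖p‖ₑ ^ (2 * s) := by
  have enorm_sq_le : ‖p‖ₑ ^ (2 : ℝ) ≤ ENNReal.ofReal (p.1 ^ 2 + p.2.1 ^ 2 + p.2.2 ^ 2) := by
    rw [ENNReal.rpow_two, ← ofReal_norm, ← ENNReal.ofReal_pow (norm_nonneg p)]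
    exact ENNReal.ofReal_le_ofReal
      ((Real.le_sqrt (norm_nonneg p) (by positivity)).1 (norm_le_sqrt_sum_sq p))
  rw [ENNReal.rpow_mul]
  exact ennreal_rpow_le_rpow_of_nonpos hs enorm_sq_le

theorem stmt19_general (α β : ℝ) (hα0 : 0 < α) (hα1 : α ≤ 1) (hβ : β < α / 2) :
    ∃ A : ℝ, ∀ x₁ : ℝ,
      ∫⁻ p in {p : ℝ × ℝ × ℝ | p.1 ^ 2 + p.2.1 ^ 2 + p.2.2 ^ 2 < 1},
          (ENNReal.ofReal |p.1 - x₁|) ^ (-1 + α) *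
            (ENNReal.ofReal (p.1 ^ 2 + p.2.1 ^ 2 + p.2.2 ^ 2)) ^ (-(1 + β))
        ≤ ENNReal.ofReal A := by
  obtain ⟨γ, hβγ, hγ0, hγ⟩ : ∃ γ, β ≤ γ ∧ 0 ≤ γ ∧ γ < α / 2 :=
    ⟨max β 0, le_max_left β 0, le_max_right β 0, max_lt hβ (by linarith)⟩
  obtain ⟨C, hC, integral_le_C⟩ := exists_setLIntegral_enorm_fst_sub_rpow_mul_enorm_rpow_le
    (volume : Measure ℝ) (volume : Measure (ℝ × ℝ)) (S := Metric.ball 0 1) (T := Metric.ball 0 1)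
    measure_ball_lt_top.ne measure_ball_lt_top.ne (p := -1 + α) (q := 2 * -(1 + γ))
    (by linarith) (by linarith) (by simpa using hα0)
    (by simp only [Module.finrank_self, Module.finrank_prod]; push_cast; linarith)
  refine ⟨C.toReal, fun x₁ ↦ ?_⟩
  rw [ENNReal.ofReal_toReal hC]
  refine le_trans (setLIntegral_mono' (measurableSet_lt (by fun_prop) (by fun_prop)) fun p hp ↦ ?_)
    ((lintegral_mono_set setOf_sum_sq_lt_one_subset_ball_prod_ball).trans (integral_le_C x₁))
  rw [← Real.enorm_eq_ofReal_abs]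
  refine mul_le_mul_right ?_ _
  calc ENNReal.ofReal (p.1 ^ 2 + p.2.1 ^ 2 + p.2.2 ^ 2) ^ (-(1 + β))
      ≤ ENNReal.ofReal (p.1 ^ 2 + p.2.1 ^ 2 + p.2.2 ^ 2) ^ (-(1 + γ)) :=
        ENNReal.rpow_le_rpow_of_exponent_ge (ENNReal.ofReal_le_one.2 (le_of_lt hp)) (by linarith)
    _ ≤ ‖p‖ₑ ^ (2 * -(1 + γ)) := ofReal_sum_sq_rpow_le_enorm_rpow (by linarith) p

/-- For every `α ∈ (0,1]` and `0 ≤ β < α/2` there is `A_{α,β} < ∞`, independent of `x₁`,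
such that for every `x₁ ∈ ℝ` with `|x₁| ≤ 1`:
`∫∫∫_{u₁²+u₂²+v₂²<1} |u₁−x₁|^{−1+α}·(u₁²+u₂²+v₂²)^{−(1+β)} du₁ du₂ dv₂ ≤ A_{α,β}`
(coordinates `p = (u₁, u₂, v₂)`; the integrand is `+∞` at its singular points). -/
theorem stmt19 (α β : ℝ) (hα0 : 0 < α) (hα1 : α ≤ 1) (hβ0 : 0 ≤ β) (hβ : β < α / 2) :
    ∃ A : ℝ, ∀ x₁ : ℝ, |x₁| ≤ 1 →
      ∫⁻ p in {p : ℝ × ℝ × ℝ | p.1 ^ 2 + p.2.1 ^ 2 + p.2.2 ^ 2 < 1},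
          (ENNReal.ofReal |p.1 - x₁|) ^ (-1 + α) *
            (ENNReal.ofReal (p.1 ^ 2 + p.2.1 ^ 2 + p.2.2 ^ 2)) ^ (-(1 + β))
        ≤ ENNReal.ofReal A := by
  obtain ⟨A, hA⟩ := stmt19_general α β hα0 hα1 hβ
  exact ⟨A, fun x₁ _ ↦ hA x₁⟩
end
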